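/- For every n, the map ρ_n sending a parking function π of length n to its parking tree PT(π) is a bijection from the set of parking functions of length n onto the set of Cayley trees labelled with [n]_0, its inverse is the map sending a Cayley tree T to its preference sequence π_T, and ρ_n is record-preserving: Rec(π) = Rec(PT(π)) for every parking function π of length n. -/

import Mathlib

/-!
The theorem holds because parking and priority-first search obey the same rule. Let `σ` and `ω` be
inverse permutations of `{0,…,n}` fixing `0`, and let `π` be a sequence; call the triple admissible if for
every `c ∈ {1,…,n}` one has `1 ≤ π c ≤ σ c` and every position in `[π c, σ c)` carries a label
smaller than `c`.

* If `σ c` is the spot of car `c`, this says that car `c` parks in the first spot at or after `π c`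
  that no earlier car occupies (`IsParkingFun.admissible`), and conversely the parking process
  recovers `σ` from `π` (`Admissible.spot_eq`).
* If `ω` is a visiting order and `π c - 1` is the position of the parent of `c`, then `c` is waiting in the
  frontier exactly at the steps of `[π c, σ c]`, so the condition says that each step visits the
  smallest vertex of the frontier (`IsCayleyTree.admissible`), and conversely the search recovers
  `ω` from the tree (`Admissible.weary_eq`).

Hence the bird's-eye permutation of a parking function is the weary permutation of its parking tree, and
the two maps are mutually inverse.

For the records, parents precede children in `ω`, so a left-to-right maximum exceeds all its
ancestors. Conversely, the positions of the ancestors of a vertex `v` cut the positions before `v` into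
intervals, and admissibility bounds the labels inside each interval by the label at its right end, an
ancestor of `v` or `v` itself (`IsParkingFun.birdsEye_le_of_iterate_le`).
-/

open scoped Classical

namespace WearyParking

/-- `f` is the parent function of a Cayley tree on `{0,…,n}` rooted at `0`:
`f 0 = 0`, `f` is pinned to `0` outside `{1,…,n}`, `f` maps `{1,…,n}` into `{0,…,n}`,
and every vertex reaches the root under iteration. -/
def IsCayleyTree (n : ℕ) (f : ℕ → ℕ) : Prop :=
  f 0 = 0 ∧ (∀ i, n < i → f i = 0) ∧
  (∀ i, 1 ≤ i → i ≤ n → f i ≤ n) ∧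
  (∀ i, 1 ≤ i → i ≤ n → ∃ k, f^[k] i = 0)

/-- A non-root vertex `i` is a record of the tree if it is greater than
all of its ancestors. -/
def IsRecord (n : ℕ) (f : ℕ → ℕ) (i : ℕ) : Prop :=
  1 ≤ i ∧ i ≤ n ∧ ∀ k, 1 ≤ k → f^[k] i < i

/-- The smallest record larger than `i`. -/
noncomputable def nextRecord (n : ℕ) (f : ℕ → ℕ) (i : ℕ) : ℕ :=
  sInf {j | IsRecord n f j ∧ i < j}

/-- The record (blob) code of the tree, a function on `{1,…,n-1}`:
at a non-record position it records the parent, and at a record position it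
records the parent of the next record. -/
noncomputable def blob (n : ℕ) (f : ℕ → ℕ) (i : ℕ) : ℕ :=
  if IsRecord n f i then f (nextRecord n f i) else f i

/-- Number of children of vertex `v` in the tree. -/
def numChildren (n : ℕ) (f : ℕ → ℕ) (v : ℕ) : ℕ :=
  ((Finset.Icc 1 n).filter fun i => f i = v).card

/-- The list of the first `i+1` vertices visited by the priority-first search:
start at the root `0`; at each step visit the smallest unvisited vertex whose
parent has been visited. -/
noncomputable def wearyList (n : ℕ) (f : ℕ → ℕ) : ℕ → List ℕ
  | 0 => [0]
  | (i + 1) =>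
      wearyList n f i ++
        [sInf {v | 1 ≤ v ∧ v ≤ n ∧ v ∉ wearyList n f i ∧ f v ∈ wearyList n f i}]

/-- The weary permutation of the tree: `weary n f i` is the `i`-th vertex visited
by the priority-first search (with `weary n f 0 = 0`). -/
noncomputable def weary (n : ℕ) (f : ℕ → ℕ) (i : ℕ) : ℕ :=
  (wearyList n f n).getD i 0

/-- The inverse of the weary permutation. -/
noncomputable def wearyInv (n : ℕ) (f : ℕ → ℕ) (v : ℕ) : ℕ :=
  sInf {i | weary n f i = v}

/-- The preference sequence `π_T` of the tree: `π_T i = ω_T⁻¹ (f_T i) + 1`. -/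
noncomputable def pref (n : ℕ) (f : ℕ → ℕ) (i : ℕ) : ℕ :=
  wearyInv n f (f i) + 1

/-- Parent function of the priority tree `pt(T)`: `ω_T⁻¹ ∘ f_T ∘ ω_T`. -/
noncomputable def prioParent (n : ℕ) (f : ℕ → ℕ) (i : ℕ) : ℕ :=
  wearyInv n f (f (weary n f i))

/-- The list of spots occupied by cars `1,…,c` in the classical parking process:
car `c` parks at the first spot `≥ π c` not occupied by an earlier car. -/
noncomputable def spotList (π : ℕ → ℕ) : ℕ → List ℕ
  | 0 => []
  | (c + 1) => spotList π c ++ [sInf {s | π (c + 1) ≤ s ∧ s ∉ spotList π c}]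

/-- The spot where car `c` ends up in the classical parking process. -/
noncomputable def spot (π : ℕ → ℕ) (c : ℕ) : ℕ :=
  (spotList π c).getD (c - 1) 0

/-- `π` is a parking function of length `n`: preferences lie in `{1,…,n}`
(pinned to `1` outside `{1,…,n}`) and every car parks within the `n` spots. -/
def IsParkingFun (n : ℕ) (π : ℕ → ℕ) : Prop :=
  (∀ c, 1 ≤ c → c ≤ n → 1 ≤ π c ∧ π c ≤ n) ∧
  (∀ c, c = 0 ∨ n < c → π c = 1) ∧
  (∀ c, 1 ≤ c → c ≤ n → spot π c ≤ n)

/-- The bird's-eye permutation `ω_π`: the car parked at spot `i` (and `0` at `0`). -/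
noncomputable def birdsEye (n : ℕ) (π : ℕ → ℕ) (i : ℕ) : ℕ :=
  if i = 0 then 0 else sInf {c | 1 ≤ c ∧ c ≤ n ∧ spot π c = i}

/-- The inverse of the bird's-eye permutation. -/
noncomputable def birdsEyeInv (n : ℕ) (π : ℕ → ℕ) (c : ℕ) : ℕ :=
  sInf {i | birdsEye n π i = c}

/-- Parent function of the parking tree `PT(π)`: `f_π i = ω_π (π i - 1)`. -/
noncomputable def ptParent (n : ℕ) (π : ℕ → ℕ) (i : ℕ) : ℕ :=
  if 1 ≤ i ∧ i ≤ n then birdsEye n π (π i - 1) else 0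

/-- `v` is a record of the parking function `π`, i.e. a left-to-right maximum of
the word `ω_π(1) ω_π(2) ⋯ ω_π(n)`. -/
def IsPfRecord (n : ℕ) (π : ℕ → ℕ) (v : ℕ) : Prop :=
  ∃ i, 1 ≤ i ∧ i ≤ n ∧ birdsEye n π i = v ∧ ∀ j, 1 ≤ j → j < i → birdsEye n π j < v

/-- The waiting time of the tree: `wait T = Σ_{i=1}^n (i - f_{pt(T)}(i))`. -/
noncomputable def wait (n : ℕ) (f : ℕ → ℕ) : ℕ :=
  ∑ i ∈ Finset.Icc 1 n, (i - prioParent n f i)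

/-- The number of priority small ascents of the tree. -/
noncomputable def psa (n : ℕ) (f : ℕ → ℕ) : ℕ :=
  ((Finset.Icc 1 n).filter fun i => prioParent n f i = i - 1).card

/-- The number of children of the root. -/
def degRoot (n : ℕ) (f : ℕ → ℕ) : ℕ := numChildren n f 0

/-- The children sequence: `chseq n f j` is the number of vertices with exactly
`j` children. -/
def chseq (n : ℕ) (f : ℕ → ℕ) (j : ℕ) : ℕ :=
  ((Finset.Icc 0 n).filter fun v => numChildren n f v = j).card

/-- The number of probes of the parking function: `n` plus the total displacement. -/
noncomputable def probes (n : ℕ) (π : ℕ → ℕ) : ℕ :=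
  n + ∑ c ∈ Finset.Icc 1 n, (spot π c - π c)

/-- The number of lucky cars of `π`: cars parking at their preferred spot. -/
noncomputable def lucky (n : ℕ) (π : ℕ → ℕ) : ℕ :=
  ((Finset.Icc 1 n).filter fun c => spot π c = π c).card

/-- The number of `1`s in `π`. -/
def ones (n : ℕ) (π : ℕ → ℕ) : ℕ :=
  ((Finset.Icc 1 n).filter fun c => π c = 1).card

/-- The multiplicity of the value `v` in the parking function `π`. -/
def multIn (n : ℕ) (π : ℕ → ℕ) (v : ℕ) : ℕ :=
  ((Finset.Icc 1 n).filter fun c => π c = v).card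

/-- The multiplicity sequence: `multSeq n π j` is the number of values in
`{1,…,n+1}` appearing exactly `j` times in `π`. -/
def multSeq (n : ℕ) (π : ℕ → ℕ) (j : ℕ) : ℕ :=
  ((Finset.Icc 1 (n + 1)).filter fun v => multIn n π v = j).card

/-- The tree is a path graph with endpoints `0` and `n`: every vertex has at most
one child and `n` is the (unique) leaf. -/
def IsPathTree (n : ℕ) (f : ℕ → ℕ) : Prop :=
  (∀ v, v ≤ n → numChildren n f v ≤ 1) ∧ numChildren n f n = 0

/-- `g` is the parent map of a rooted forest on `{1,…,n}` rooted at `{1,…,k}`: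
the vertices `1,…,k` are roots (fixed points), every other vertex of `{1,…,n}` has a
parent in `{1,…,n}`, every vertex reaches one of the roots under iteration, and `g`
is pinned to `0` outside `{1,…,n}`. -/
def IsForestRootedAt (n k : ℕ) (g : ℕ → ℕ) : Prop :=
  (∀ i, 1 ≤ i → i ≤ k → g i = i) ∧
  (∀ i, k < i → i ≤ n → 1 ≤ g i ∧ g i ≤ n) ∧
  (∀ i, 1 ≤ i → i ≤ n → ∃ m, 1 ≤ g^[m] i ∧ g^[m] i ≤ k) ∧
  (∀ i, i = 0 ∨ n < i → g i = 0)

/-! ### Admissible triples -/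

/-- `ω` and `σ` are mutually inverse permutations of `{0,…,n}` fixing `0`, and each `c ∈ {1,…,n}`
satisfies `1 ≤ π c ≤ σ c`, with every position `s` in `[π c, σ c)` carrying a smaller label
`ω s < c`. Read with `σ c` as the spot of car `c` this is the parking rule; read with `ω` as a visiting
order and `π c - 1` as the position of the parent of `c` it is the priority-first rule. -/
structure Admissible (n : ℕ) (σ ω π : ℕ → ℕ) : Prop where
  ω_zero : ω 0 = 0
  σ_zero : σ 0 = 0
  ω_le : ∀ i, i ≤ n → ω i ≤ n
  σ_le : ∀ c, c ≤ n → σ c ≤ n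
  σ_ω : ∀ i, i ≤ n → σ (ω i) = i
  ω_σ : ∀ c, c ≤ n → ω (σ c) = c
  pos : ∀ c, 1 ≤ c → c ≤ n → 1 ≤ π c
  le : ∀ c, 1 ≤ c → c ≤ n → π c ≤ σ c
  lt : ∀ c, 1 ≤ c → c ≤ n → ∀ s, π c ≤ s → s < σ c → ω s < c

namespace Admissible

variable {n : ℕ} {σ ω π : ℕ → ℕ}

lemma σ_pos (h : Admissible n σ ω π) {c : ℕ} (h1 : 1 ≤ c) (h2 : c ≤ n) : 1 ≤ σ c :=
  (h.pos c h1 h2).trans (h.le c h1 h2)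

lemma ω_pos (h : Admissible n σ ω π) {i : ℕ} (h1 : 1 ≤ i) (h2 : i ≤ n) : 1 ≤ ω i := by
  by_contra hc
  have h0 : ω i = 0 := by omega
  have := h.σ_ω i h2
  rw [h0, h.σ_zero] at this
  omega

end Admissible

/-! ### The parking process -/

lemma spotList_length (π : ℕ → ℕ) (c : ℕ) : (spotList π c).length = c := by
  induction c with
  | zero => rfl
  | succ c ih => simp [spotList, ih]

lemma spot_succ (π : ℕ → ℕ) (c : ℕ) :
    spot π (c + 1) = sInf {s | π (c + 1) ≤ s ∧ s ∉ spotList π c} := by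
  simp [spot, spotList, List.getD_eq_getElem?_getD, spotList_length]

lemma mem_spotList (π : ℕ → ℕ) (c s : ℕ) :
    s ∈ spotList π c ↔ ∃ c', 1 ≤ c' ∧ c' ≤ c ∧ spot π c' = s := by
  induction c with
  | zero => simp [spotList]
  | succ c ih =>
    rw [spotList, ← spot_succ, List.mem_append, ih, List.mem_singleton]
    constructor
    · rintro (⟨c', h1, h2, h3⟩ | h)
      · exact ⟨c', h1, by omega, h3⟩
      · exact ⟨c + 1, by omega, le_rfl, h.symm⟩
    · rintro ⟨c', h1, h2, h3⟩
      rcases Nat.lt_or_ge c c' with h | h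
      · obtain rfl : c' = c + 1 := by omega
        exact Or.inr h3.symm
      · exact Or.inl ⟨c', h1, h, h3⟩

lemma spot_set_nonempty (π : ℕ → ℕ) (c : ℕ) :
    {s | π (c + 1) ≤ s ∧ s ∉ spotList π c}.Nonempty := by
  obtain ⟨s, hs, hs'⟩ :=
    (Set.Ici_infinite (π (c + 1))).exists_notMem_finset (spotList π c).toFinset
  exact ⟨s, hs, by simpa using hs'⟩

lemma pref_le_spot (π : ℕ → ℕ) {c : ℕ} (hc : 1 ≤ c) : π c ≤ spot π c := by
  obtain ⟨c, rfl⟩ : ∃ d, c = d + 1 := ⟨c - 1, by omega⟩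
  rw [spot_succ]
  exact (Nat.sInf_mem (spot_set_nonempty π c)).1

lemma spot_ne (π : ℕ → ℕ) {c' c : ℕ} (hc' : 1 ≤ c') (hc : c' < c) : spot π c' ≠ spot π c := by
  obtain ⟨c, rfl⟩ : ∃ d, c = d + 1 := ⟨c - 1, by omega⟩
  intro h
  have := (Nat.sInf_mem (spot_set_nonempty π c)).2
  rw [← spot_succ, mem_spotList] at this
  exact this ⟨_, hc', by omega, h⟩

/-- A spot passed over by car `c` is occupied by an earlier car. -/
lemma exists_of_lt_spot (π : ℕ → ℕ) {c s : ℕ} (hc : 1 ≤ c) (h1 : π c ≤ s) (h2 : s < spot π c) :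
    ∃ c', 1 ≤ c' ∧ c' < c ∧ spot π c' = s := by
  obtain ⟨c, rfl⟩ : ∃ d, c = d + 1 := ⟨c - 1, by omega⟩
  rw [spot_succ] at h2
  have := Nat.notMem_of_lt_sInf h2
  simp only [Set.mem_ofPred_eq, not_and, not_not] at this
  obtain ⟨c', a, b, d⟩ := (mem_spotList π c s).1 (this h1)
  exact ⟨c', a, by omega, d⟩

lemma spot_zero (π : ℕ → ℕ) : spot π 0 = 0 := by simp [spot, spotList]

lemma spot_injOn (π : ℕ → ℕ) : Set.InjOn (spot π) {c | 1 ≤ c} := by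
  intro a ha b hb hab
  rcases lt_trichotomy a b with h | h | h
  · exact absurd hab (spot_ne π ha h)
  · exact h
  · exact absurd hab.symm (spot_ne π hb h)

lemma birdsEye_spot {n : ℕ} {π : ℕ → ℕ} {c : ℕ} (h1 : 1 ≤ c) (h2 : c ≤ n) (h3 : spot π c ≠ 0) :
    birdsEye n π (spot π c) = c := by
  rw [birdsEye, if_neg h3]
  have hm := Nat.sInf_mem (s := {d | 1 ≤ d ∧ d ≤ n ∧ spot π d = spot π c}) ⟨c, h1, h2, rfl⟩
  exact spot_injOn π hm.1 h1 hm.2.2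

/-- The spots and cars of a parking function form an admissible triple. -/
lemma IsParkingFun.admissible {n : ℕ} {π : ℕ → ℕ} (h : IsParkingFun n π) :
    Admissible n (spot π) (birdsEye n π) π := by
  obtain ⟨hr, -, hs⟩ := h
  have hpos : ∀ c, 1 ≤ c → c ≤ n → 1 ≤ spot π c := fun c h1 h2 =>
    (hr c h1 h2).1.trans (pref_le_spot π h1)
  have hb0 : birdsEye n π 0 = 0 := by simp [birdsEye]
  -- an injection of the `n` cars into the `n` spots is onto
  have hsurj : ∀ i, 1 ≤ i → i ≤ n → ∃ c, 1 ≤ c ∧ c ≤ n ∧ spot π c = i := by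
    intro i h1 h2
    have := Finset.surj_on_of_inj_on_of_card_le (s := Finset.Icc 1 n) (t := Finset.Icc 1 n)
      (fun c _ => spot π c)
      (fun c hc => by
        rw [Finset.mem_Icc] at hc ⊢
        exact ⟨hpos c hc.1 hc.2, hs c hc.1 hc.2⟩)
      (fun a b ha hb hab => spot_injOn π (Finset.mem_Icc.1 ha).1 (Finset.mem_Icc.1 hb).1 hab)
      le_rfl i (Finset.mem_Icc.2 ⟨h1, h2⟩)
    obtain ⟨c, hc, hci⟩ := this
    rw [Finset.mem_Icc] at hc
    exact ⟨c, hc.1, hc.2, hci.symm⟩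
  have hbs : ∀ c, 1 ≤ c → c ≤ n → birdsEye n π (spot π c) = c := fun c h1 h2 =>
    birdsEye_spot h1 h2 (by have := hpos c h1 h2; omega)
  refine ⟨hb0, spot_zero π, ?_, ?_, ?_, ?_, fun c h1 h2 => (hr c h1 h2).1,
    fun c h1 _ => pref_le_spot π h1, ?_⟩
  · intro i hi
    rcases Nat.eq_zero_or_pos i with rfl | h
    · omega
    · obtain ⟨c, h1, h2, rfl⟩ := hsurj i h hi
      rwa [hbs c h1 h2]
  · intro c hc
    rcases Nat.eq_zero_or_pos c with rfl | h
    · rw [spot_zero]; omega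
    · exact hs c h hc
  · intro i hi
    rcases Nat.eq_zero_or_pos i with rfl | h
    · rw [hb0, spot_zero]
    · obtain ⟨c, h1, h2, rfl⟩ := hsurj i h hi
      rw [hbs c h1 h2]
  · intro c hc
    rcases Nat.eq_zero_or_pos c with rfl | h
    · rw [spot_zero, hb0]
    · exact hbs c h hc
  · intro c h1 h2 s h3 h4
    obtain ⟨d, a, b, rfl⟩ := exists_of_lt_spot π h1 h3 h4
    rwa [hbs d a (by omega)]

/-- In an admissible triple, `π` determines `σ`: it is the outcome of the parking process. -/
lemma Admissible.spot_eq {n : ℕ} {σ ω π : ℕ → ℕ} (h : Admissible n σ ω π) :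
    ∀ c, c ≤ n → spot π c = σ c := by
  intro c
  induction c using Nat.strong_induction_on with
  | _ c ih =>
    intro hc
    rcases Nat.eq_zero_or_pos c with rfl | h1
    · rw [spot_zero, h.σ_zero]
    rcases lt_trichotomy (spot π c) (σ c) with hlt | heq | hgt
    · -- the car `ω (spot π c)` is earlier and has parked in the same spot
      exfalso
      have hpc := pref_le_spot π h1
      have hω := h.lt c h1 hc _ hpc hlt
      have hle := h.σ_le c hc
      have hpos := h.ω_pos ((h.pos c h1 hc).trans hpc) (by omega)
      have := ih _ hω (by omega)
      rw [h.σ_ω _ (by omega)] at this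
      exact spot_ne π hpos hω this
    · exact heq
    · exfalso
      obtain ⟨c', a, b, e⟩ := exists_of_lt_spot π h1 (h.le c h1 hc) hgt
      rw [ih c' b (by omega)] at e
      have := congrArg ω e
      rw [h.ω_σ _ (by omega), h.ω_σ _ hc] at this
      omega

lemma Admissible.birdsEye_eq {n : ℕ} {σ ω π : ℕ → ℕ} (h : Admissible n σ ω π) {i : ℕ}
    (hi : i ≤ n) : birdsEye n π i = ω i := by
  rcases Nat.eq_zero_or_pos i with rfl | h1
  · simp [birdsEye, h.ω_zero]
  · have hs : spot π (ω i) = i := by rw [h.spot_eq _ (h.ω_le i hi), h.σ_ω i hi]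
    have := birdsEye_spot (n := n) (π := π) (h.ω_pos h1 hi) (h.ω_le i hi) (by omega)
    rwa [hs] at this

/-! ### Priority-first search -/

lemma wearyList_length (n : ℕ) (f : ℕ → ℕ) (i : ℕ) : (wearyList n f i).length = i + 1 := by
  induction i with
  | zero => rfl
  | succ c ih => simp [wearyList, ih]

/-- The entries of the search list do not depend on how long the search is run. -/
lemma wearyList_getD (n : ℕ) (f : ℕ → ℕ) {j i : ℕ} (h : j ≤ i) :
    (wearyList n f i).getD j 0 = (wearyList n f j).getD j 0 := by
  induction i, h using Nat.le_induction with
  | base => rfl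
  | succ i hi ih =>
    rw [← ih, wearyList]
    simp only [List.getD_eq_getElem?_getD]
    rw [List.getElem?_append_left (by rw [wearyList_length]; omega)]

lemma weary_zero (n : ℕ) (f : ℕ → ℕ) : weary n f 0 = 0 := by
  rw [weary, wearyList_getD n f (Nat.zero_le n)]
  rfl

lemma weary_succ (n : ℕ) (f : ℕ → ℕ) {i : ℕ} (hi : i < n) :
    weary n f (i + 1) =
      sInf {v | 1 ≤ v ∧ v ≤ n ∧ v ∉ wearyList n f i ∧ f v ∈ wearyList n f i} := by
  rw [weary, wearyList_getD n f hi]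
  simp [wearyList, List.getD_eq_getElem?_getD, wearyList_length]

lemma mem_wearyList (n : ℕ) (f : ℕ → ℕ) {i : ℕ} (hi : i ≤ n) (v : ℕ) :
    v ∈ wearyList n f i ↔ ∃ j ≤ i, weary n f j = v := by
  rw [List.mem_iff_getElem]
  constructor
  · rintro ⟨j, hj, rfl⟩
    have hj' : j ≤ i := by rw [wearyList_length] at hj; omega
    refine ⟨j, hj', ?_⟩
    rw [weary, wearyList_getD n f (hj'.trans hi), ← wearyList_getD n f hj',
      List.getD_eq_getElem _ _ hj]
  · rintro ⟨j, hj, rfl⟩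
    have hj' : j < (wearyList n f i).length := by rw [wearyList_length]; omega
    refine ⟨j, hj', ?_⟩
    rw [weary, wearyList_getD n f (hj.trans hi), ← wearyList_getD n f hj,
      List.getD_eq_getElem _ _ hj']

/-- While fewer than `n` non-root vertices of a Cayley tree have been visited, some unvisited vertex
has a visited parent: an unvisited vertex exists by counting, and its path to the root enters
the visited set. -/
lemma IsCayleyTree.frontier_nonempty {n : ℕ} {f : ℕ → ℕ} (h : IsCayleyTree n f) {i : ℕ}
    (hi : i < n) :
    {v | 1 ≤ v ∧ v ≤ n ∧ v ∉ wearyList n f i ∧ f v ∈ wearyList n f i}.Nonempty := by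
  obtain ⟨h0, -, hle, hit⟩ := h
  have hz : 0 ∈ wearyList n f i :=
    (mem_wearyList n f hi.le 0).2 ⟨0, Nat.zero_le _, weary_zero n f⟩
  obtain ⟨v, hv, hv'⟩ : ∃ v ∈ Finset.range (n + 1), v ∉ (wearyList n f i).toFinset := by
    apply Finset.exists_mem_notMem_of_card_lt_card
    calc _ ≤ (wearyList n f i).length := List.toFinset_card_le _
      _ < _ := by rw [wearyList_length, Finset.card_range]; omega
  rw [Finset.mem_range] at hv
  rw [List.mem_toFinset] at hv'
  have hv1 : 1 ≤ v := by
    rcases Nat.eq_zero_or_pos v with rfl | h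
    · exact absurd hz hv'
    · exact h
  obtain ⟨k, hk⟩ := hit v hv1 (by omega)
  have hk' : f^[k] v ∈ wearyList n f i := by rwa [hk]
  clear hk
  induction k generalizing v with
  | zero => exact absurd hk' hv'
  | succ k ih =>
    by_cases hf : f v ∈ wearyList n f i
    · exact ⟨v, hv1, by omega, hv', hf⟩
    · refine ih (f v) ?_ hf ?_ (by simpa using hk')
      · have := hle v hv1 (by omega)
        omega
      · rcases Nat.eq_zero_or_pos (f v) with h | h
        · rw [h] at hf; exact absurd hz hf
        · exact h

/-- The search order of a Cayley tree and its preference sequence form an admissible triple. -/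
lemma IsCayleyTree.admissible {n : ℕ} {f : ℕ → ℕ} (h : IsCayleyTree n f) :
    Admissible n (wearyInv n f) (weary n f) (pref n f) := by
  have hmem : ∀ i, i < n → weary n f (i + 1) ∈
      {v | 1 ≤ v ∧ v ≤ n ∧ v ∉ wearyList n f i ∧ f v ∈ wearyList n f i} := by
    intro i hi
    rw [weary_succ n f hi]
    exact Nat.sInf_mem (h.frontier_nonempty hi)
  have hle : ∀ i, i ≤ n → weary n f i ≤ n := by
    intro i hi
    cases i with
    | zero => rw [weary_zero]; omega
    | succ i => exact (hmem i hi).2.1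
  have hne : ∀ j i, j < i → i ≤ n → weary n f j ≠ weary n f i := by
    intro j i hji hi heq
    obtain ⟨i, rfl⟩ : ∃ d, i = d + 1 := ⟨i - 1, by omega⟩
    exact (hmem i hi).2.2.1 ((mem_wearyList n f (by omega) _).2 ⟨j, by omega, heq⟩)
  have hinj : ∀ j i, j ≤ n → i ≤ n → weary n f j = weary n f i → j = i := by
    intro j i hj hi heq
    rcases lt_trichotomy j i with hlt | h | hlt
    · exact absurd heq (hne j i hlt hi)
    · exact h
    · exact absurd heq.symm (hne i j hlt hj)
  have hsurj : ∀ v, v ≤ n → ∃ i ≤ n, weary n f i = v := by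
    intro v hv
    obtain ⟨i, hi, hiv⟩ := Finset.surj_on_of_inj_on_of_card_le
      (s := Finset.Iic n) (t := Finset.Iic n) (fun i _ => weary n f i)
      (fun i hi => Finset.mem_Iic.2 (hle i (Finset.mem_Iic.1 hi)))
      (fun a b ha hb hab => hinj a b (Finset.mem_Iic.1 ha) (Finset.mem_Iic.1 hb) hab)
      le_rfl v (Finset.mem_Iic.2 hv)
    exact ⟨i, Finset.mem_Iic.1 hi, hiv.symm⟩
  have hσω : ∀ i, i ≤ n → wearyInv n f (weary n f i) = i := by
    intro i hi
    have h1 : wearyInv n f (weary n f i) ≤ i := Nat.sInf_le (show weary n f i = _ from rfl)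
    have h2 : weary n f (wearyInv n f (weary n f i)) = weary n f i :=
      Nat.sInf_mem (s := {j | weary n f j = weary n f i}) ⟨i, rfl⟩
    exact hinj _ _ (by omega) hi h2
  have hf : ∀ v, 1 ≤ v → v ≤ n → f v ≤ n := h.2.2.1
  have hσ : ∀ v, v ≤ n → ∃ i ≤ n, weary n f i = v ∧ wearyInv n f v = i := by
    intro v hv
    obtain ⟨i, hi, rfl⟩ := hsurj v hv
    exact ⟨i, hi, rfl, hσω i hi⟩
  have hmem' : ∀ i v, i ≤ n → v ≤ n → (v ∈ wearyList n f i ↔ wearyInv n f v ≤ i) := by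
    intro i v hi hv
    obtain ⟨j, hj, rfl, e⟩ := hσ v hv
    rw [mem_wearyList n f hi, e]
    constructor
    · rintro ⟨k, hk, hkj⟩
      have := hinj k j (by omega) hj hkj
      omega
    · intro hji
      exact ⟨j, hji, rfl⟩
  have hσ0 : wearyInv n f 0 = 0 := by
    have := hσω 0 (Nat.zero_le _)
    rwa [weary_zero] at this
  refine ⟨weary_zero n f, hσ0, hle, ?_, hσω, ?_, ?_, ?_, ?_⟩
  · intro c hc
    obtain ⟨i, hi, -, e⟩ := hσ c hc
    omega
  · intro c hc
    obtain ⟨i, hi, e', e⟩ := hσ c hc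
    rw [e, e']
  · intro c _ _
    rw [pref]; omega
  · intro c h1 h2
    obtain ⟨i, hi, e', e⟩ := hσ c h2
    obtain ⟨i, rfl⟩ : ∃ d, i = d + 1 := by
      refine ⟨i - 1, ?_⟩
      rcases Nat.eq_zero_or_pos i with rfl | h
      · rw [weary_zero] at e'; omega
      · omega
    have := (hmem i hi).2.2.2
    rw [e', hmem' i _ (by omega) (hf c h1 h2)] at this
    rw [pref, e]; omega
  · intro c h1 h2 s h3 h4
    obtain ⟨i, hi, e', e⟩ := hσ c h2
    rw [pref] at h3
    obtain ⟨s, rfl⟩ : ∃ d, s = d + 1 := ⟨s - 1, by omega⟩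
    -- at step `s + 1` the vertex `c` is in the frontier but is not the one chosen
    have hle' : weary n f (s + 1) ≤ c := by
      rw [weary_succ n f (by omega)]
      refine Nat.sInf_le ⟨h1, h2, ?_, ?_⟩
      · rw [hmem' s c (by omega) h2]; omega
      · rw [hmem' s _ (by omega) (hf c h1 h2)]; omega
    refine lt_of_le_of_ne hle' ?_
    rw [← e']
    exact hne _ _ (by omega) hi

/-- In an admissible triple, the search order of the tree in which the parent of `v` sits at
position `π v - 1` is `ω`. -/
lemma Admissible.weary_eq {n : ℕ} {σ ω π f : ℕ → ℕ} (h : Admissible n σ ω π)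
    (hf : ∀ v, 1 ≤ v → v ≤ n → f v = ω (π v - 1)) : ∀ i, i ≤ n → weary n f i = ω i := by
  intro i
  induction i using Nat.strong_induction_on with
  | _ i ih =>
    intro hi
    cases i with
    | zero => rw [weary_zero, h.ω_zero]
    | succ i =>
      have hmem : ∀ v, v ≤ n → (v ∈ wearyList n f i ↔ σ v ≤ i) := by
        intro v hv
        rw [mem_wearyList n f (by omega)]
        constructor
        · rintro ⟨j, hj, rfl⟩
          rw [ih j (by omega) (by omega), h.σ_ω j (by omega)]
          exact hj
        · intro hv'
          exact ⟨σ v, hv', by rw [ih _ (by omega) (by omega), h.ω_σ v hv]⟩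
      have hfσ : ∀ v, 1 ≤ v → v ≤ n → (f v ∈ wearyList n f i ↔ π v ≤ i + 1) := by
        intro v h1 h2
        have := h.le v h1 h2
        have := h.σ_le v h2
        rw [hf v h1 h2, hmem _ (h.ω_le _ (by omega)), h.σ_ω _ (by omega)]
        omega
      have hp := h.ω_pos (i := i + 1) (by omega) hi
      have hq := h.ω_le _ hi
      have hσω := h.σ_ω _ hi
      have hin : ω (i + 1) ∈
          {v | 1 ≤ v ∧ v ≤ n ∧ v ∉ wearyList n f i ∧ f v ∈ wearyList n f i} := by
        refine ⟨hp, hq, ?_, ?_⟩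
        · rw [hmem _ hq]; omega
        · rw [hfσ _ hp hq]
          have := h.le _ hp hq
          omega
      rw [weary_succ n f hi]
      refine le_antisymm (Nat.sInf_le hin) (le_csInf ⟨_, hin⟩ ?_)
      rintro v ⟨h1, h2, h3, h4⟩
      rw [hmem v h2] at h3
      rw [hfσ v h1 h2] at h4
      rcases Nat.lt_or_ge (i + 1) (σ v) with hlt | hge
      · exact (h.lt v h1 h2 _ h4 hlt).le
      · have : σ v = i + 1 := by omega
        rw [← this, h.ω_σ v h2]

lemma Admissible.wearyInv_eq {n : ℕ} {σ ω π f : ℕ → ℕ} (h : Admissible n σ ω π)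
    (hf : ∀ v, 1 ≤ v → v ≤ n → f v = ω (π v - 1)) {c : ℕ} (hc : c ≤ n) :
    wearyInv n f c = σ c := by
  have hσ := h.σ_le c hc
  have hs : weary n f (σ c) = c := by rw [h.weary_eq hf _ hσ, h.ω_σ c hc]
  have h1 : wearyInv n f c ≤ σ c := Nat.sInf_le hs
  have h2 : weary n f (wearyInv n f c) = c :=
    Nat.sInf_mem (s := {j | weary n f j = c}) ⟨_, hs⟩
  rw [h.weary_eq hf _ (by omega)] at h2
  have := h.σ_ω (wearyInv n f c) (by omega)
  rw [h2] at this
  exact this.symm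

/-! ### The parking tree -/

lemma ptParent_of_mem {n : ℕ} {π : ℕ → ℕ} (v : ℕ) (h1 : 1 ≤ v) (h2 : v ≤ n) :
    ptParent n π v = birdsEye n π (π v - 1) := if_pos ⟨h1, h2⟩

lemma ptParent_zero (n : ℕ) (π : ℕ → ℕ) : ptParent n π 0 = 0 := if_neg (by omega)

/-- Each parent sits strictly to the left of its child in the bird's-eye word. -/
lemma IsParkingFun.spot_ptParent {n : ℕ} {π : ℕ → ℕ} (h : IsParkingFun n π) {v : ℕ} (h1 : 1 ≤ v)
    (h2 : v ≤ n) :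
    ptParent n π v ≤ n ∧ spot π (ptParent n π v) = π v - 1 ∧
      spot π (ptParent n π v) < spot π v := by
  have A := h.admissible
  have a := A.le v h1 h2
  have b := A.σ_le v h2
  have c := A.pos v h1 h2
  rw [ptParent_of_mem v h1 h2, A.σ_ω _ (by omega)]
  exact ⟨A.ω_le _ (by omega), rfl, by omega⟩

lemma IsParkingFun.isCayleyTree {n : ℕ} {π : ℕ → ℕ} (h : IsParkingFun n π) :
    IsCayleyTree n (ptParent n π) := by
  refine ⟨ptParent_zero n π, fun i hi => if_neg (by omega),
    fun i h1 h2 => (h.spot_ptParent h1 h2).1, ?_⟩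
  intro i h1 h2
  induction hs : spot π i using Nat.strong_induction_on generalizing i with
  | _ s ih =>
    obtain ⟨a, -, b⟩ := h.spot_ptParent h1 h2
    rcases Nat.eq_zero_or_pos (ptParent n π i) with h0 | h0
    · exact ⟨1, h0⟩
    · obtain ⟨k, hk⟩ := ih _ (hs ▸ b) _ h0 a rfl
      exact ⟨k + 1, hk⟩

lemma IsCayleyTree.isParkingFun {n : ℕ} {f : ℕ → ℕ} (h : IsCayleyTree n f) :
    IsParkingFun n (pref n f) := by
  have A := h.admissible
  refine ⟨fun c h1 h2 => ⟨A.pos c h1 h2, (A.le c h1 h2).trans (A.σ_le c h2)⟩, ?_, ?_⟩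
  · intro c hc
    have : f c = 0 := by
      rcases hc with rfl | hc
      · exact h.1
      · exact h.2.1 c hc
    rw [pref, this, A.σ_zero]
  · intro c _ h2
    rw [A.spot_eq c h2]
    exact A.σ_le c h2

lemma IsParkingFun.pref_ptParent {n : ℕ} {π : ℕ → ℕ} (h : IsParkingFun n π) :
    pref n (ptParent n π) = π := by
  have A := h.admissible
  funext c
  rw [pref]
  by_cases hc : 1 ≤ c ∧ c ≤ n
  · obtain ⟨a, b, -⟩ := h.spot_ptParent hc.1 hc.2
    rw [A.wearyInv_eq ptParent_of_mem a, b]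
    have := A.pos c hc.1 hc.2
    omega
  · rw [ptParent, if_neg hc, A.wearyInv_eq ptParent_of_mem (Nat.zero_le _), A.σ_zero,
      h.2.1 c (by omega)]

lemma IsCayleyTree.ptParent_pref {n : ℕ} {f : ℕ → ℕ} (h : IsCayleyTree n f) :
    ptParent n (pref n f) = f := by
  have A := h.admissible
  funext c
  by_cases hc : 1 ≤ c ∧ c ≤ n
  · have hf := h.2.2.1 c hc.1 hc.2
    rw [ptParent_of_mem c hc.1 hc.2, pref, Nat.add_sub_cancel, A.birdsEye_eq (A.σ_le _ hf),
      A.ω_σ _ hf]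
  · rw [ptParent, if_neg hc]
    rcases Nat.eq_zero_or_pos c with rfl | h0
    · exact h.1.symm
    · exact (h.2.1 c (by omega)).symm

/-! ### Records -/

/-- If `w` and all its ancestors are at most `v`, so is every label at or before the position of `w`:
the labels strictly between the positions of a vertex and its parent are smaller than the vertex. -/
lemma IsParkingFun.birdsEye_le_of_iterate_le {n : ℕ} {π : ℕ → ℕ} (h : IsParkingFun n π) {v w : ℕ}
    (hw : w ≤ n) (hv : ∀ k, (ptParent n π)^[k] w ≤ v) {j : ℕ} (hj : j ≤ spot π w) :
    birdsEye n π j ≤ v := by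
  have A := h.admissible
  induction hs : spot π w using Nat.strong_induction_on generalizing w with
  | _ s ih =>
    rcases Nat.eq_zero_or_pos w with rfl | h1
    · rw [A.σ_zero] at hj
      obtain rfl : j = 0 := by omega
      rw [A.ω_zero]; omega
    obtain ⟨a, b, c⟩ := h.spot_ptParent h1 hw
    rcases Nat.lt_or_ge j (π w) with hlt | hge
    · exact ih _ (hs ▸ c) a (fun k => hv (k + 1)) (by omega) rfl
    · have hwv : w ≤ v := hv 0
      rcases Nat.lt_or_ge j (spot π w) with hlt | hge'
      · exact (A.lt w h1 hw j hge hlt).le.trans hwv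
      · obtain rfl : j = spot π w := by omega
        rwa [A.ω_σ w hw]

lemma IsParkingFun.iterate_spot {n : ℕ} {π : ℕ → ℕ} (h : IsParkingFun n π) {v : ℕ} (h1 : 1 ≤ v)
    (h2 : v ≤ n) (k : ℕ) :
    (ptParent n π)^[k + 1] v ≤ n ∧ spot π ((ptParent n π)^[k + 1] v) < spot π v := by
  induction k with
  | zero => exact ⟨(h.spot_ptParent h1 h2).1, (h.spot_ptParent h1 h2).2.2⟩
  | succ k ih =>
    rw [Function.iterate_succ_apply']
    rcases Nat.eq_zero_or_pos ((ptParent n π)^[k + 1] v) with h0 | h0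
    · rw [h0] at ih ⊢
      rwa [ptParent_zero]
    · have := h.spot_ptParent h0 ih.1
      exact ⟨this.1, this.2.2.trans ih.2⟩

lemma IsParkingFun.isRecord_iff {n : ℕ} {π : ℕ → ℕ} (h : IsParkingFun n π) (v : ℕ) :
    IsRecord n (ptParent n π) v ↔ IsPfRecord n π v := by
  have A := h.admissible
  constructor
  · rintro ⟨h1, h2, h3⟩
    refine ⟨spot π v, A.σ_pos h1 h2, A.σ_le v h2, A.ω_σ v h2, ?_⟩
    intro j _ hj
    have hle : birdsEye n π j ≤ v := by
      refine h.birdsEye_le_of_iterate_le h2 (fun k => ?_) hj.le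
      rcases Nat.eq_zero_or_pos k with rfl | hk
      · exact le_rfl
      · exact (h3 k hk).le
    refine lt_of_le_of_ne hle ?_
    rintro e
    have := A.σ_ω j (hj.le.trans (A.σ_le v h2))
    rw [e] at this
    omega
  · rintro ⟨i, h1, h2, rfl, h3⟩
    have hp := A.ω_pos h1 h2
    have hq := A.ω_le i h2
    refine ⟨hp, hq, ?_⟩
    intro k hk
    obtain ⟨k, rfl⟩ : ∃ d, k = d + 1 := ⟨k - 1, by omega⟩
    obtain ⟨a, b⟩ := h.iterate_spot hp hq k
    rw [A.σ_ω i h2] at b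
    rcases Nat.eq_zero_or_pos ((ptParent n π)^[k + 1] (birdsEye n π i)) with h0 | h0
    · rw [h0]; exact hp
    · have := h3 _ (A.σ_pos h0 a) b
      rwa [A.ω_σ _ a] at this

/-- The map `π ↦ PT(π)` is a record-preserving bijection from
parking functions of length `n` onto Cayley trees labelled with `[n]₀`, with inverse
`T ↦ π_T`. -/
theorem stmt14 (n : ℕ) :
    (∀ π : ℕ → ℕ, IsParkingFun n π → IsCayleyTree n (ptParent n π)) ∧
    (∀ f : ℕ → ℕ, IsCayleyTree n f → IsParkingFun n (pref n f)) ∧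
    (∀ π : ℕ → ℕ, IsParkingFun n π → pref n (ptParent n π) = π) ∧
    (∀ f : ℕ → ℕ, IsCayleyTree n f → ptParent n (pref n f) = f) ∧
    Set.BijOn (fun π => ptParent n π)
      {π : ℕ → ℕ | IsParkingFun n π} {f : ℕ → ℕ | IsCayleyTree n f} ∧
    (∀ π : ℕ → ℕ, IsParkingFun n π →
      ∀ v, IsRecord n (ptParent n π) v ↔ IsPfRecord n π v) := by
  exact ⟨fun _ h => h.isCayleyTree, fun _ h => h.isParkingFun, fun _ h => h.pref_ptParent,
    fun _ h => h.ptParent_pref,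
    Set.InvOn.bijOn (f' := fun f => pref n f)
      ⟨fun _ h => IsParkingFun.pref_ptParent h, fun _ h => IsCayleyTree.ptParent_pref h⟩
      (fun _ h => IsParkingFun.isCayleyTree h) (fun _ h => IsCayleyTree.isParkingFun h),
    fun _ h => h.isRecord_iff⟩

end WearyParking
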